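/- arXiv:1402.2322 — 2 statements merged into one kernel-verified Lean document; each statement's English description precedes it below -/
import Mathlib

section
/- Let K be a field with char K ≠ 2, let U and U' be finite-dimensional K-vector spaces, and let ⟨·,·⟩ : U × U' → K be a nondegenerate bilinear pairing. Define bilinear forms on U ⊕ U' by (u⊕α, v⊕β) = ⟨u,β⟩, (u⊕α, v⊕β)_sym = ⟨u,β⟩ + ⟨v,α⟩, and (u⊕α, v⊕β)_skew = ⟨u,β⟩ − ⟨v,α⟩. If L ⊆ U ⊕ U' is a subspace that is Lagrangian for (·,·)_sym, i.e. for every x ∈ U ⊕ U' one has ((x,y)_sym = 0 for all y ∈ L) if and only if x ∈ L, then the kernel of the restriction of (·,·)_skew to L, namely {x ∈ L : (x,y)_skew = 0 for all y ∈ L}, equals (L ∩ (U ⊕ 0)) ⊕ (L ∩ (0 ⊕ U')). -/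
/-!
The sum and the difference of the forms `(·,·)_sym` and `(·,·)_skew` are `2⟨u,β⟩` and `2⟨v,α⟩`, so
when `2` is cancellable, `u ⊕ α` is orthogonal to `L` for both forms iff `⟨u,·⟩` and `⟨·,α⟩` vanish
on `L` separately, i.e. iff `u ⊕ 0` and `0 ⊕ α` both lie in the `(·,·)_sym`-orthogonal of `L`. For a
Lagrangian `L`, that orthogonal is `L` itself.
-/

lemma mem_inf_fst_sup_inf_snd_iff {R U U' : Type*} [Semiring R] [AddCommMonoid U] [Module R U]
    [AddCommMonoid U'] [Module R U'] {L : Submodule R (U × U')} {x : U × U'} :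
    x ∈ (L ⊓ Submodule.fst R U U') ⊔ (L ⊓ Submodule.snd R U U') ↔ (x.1, 0) ∈ L ∧ (0, x.2) ∈ L := by
  constructor
  · intro hx
    obtain ⟨⟨u, α⟩, ⟨hu, hα⟩, ⟨v, β⟩, ⟨hβ, hv⟩, rfl⟩ := Submodule.mem_sup.1 hx
    obtain rfl : α = 0 := hα
    obtain rfl : v = 0 := hv
    simpa using And.intro hu hβ
  · rintro ⟨hfst, hsnd⟩
    exact Submodule.mem_sup.2 ⟨(x.1, 0), ⟨hfst, rfl⟩, (0, x.2), ⟨hsnd, rfl⟩, by simp⟩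

lemma add_eq_zero_and_sub_eq_zero_iff {R M : Type*} [Semiring R] [AddCommGroup M] [Module R M]
    (h2 : IsSMulRegular M (2 : R)) {a b : M} :
    a + b = 0 ∧ a - b = 0 ↔ a = 0 ∧ b = 0 := by
  refine ⟨fun ⟨hadd, hsub⟩ => ?_, fun ⟨ha, hb⟩ => by simp [ha, hb]⟩
  obtain rfl : a = b := sub_eq_zero.1 hsub
  have ha : a = 0 := h2.right_eq_zero_of_smul (by rwa [two_smul])
  exact ⟨ha, ha⟩

section PairingForms

variable {R U U' M : Type*} [CommSemiring R] [AddCommMonoid U] [Module R U] [AddCommMonoid U']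
  [Module R U']

section AddCommMonoid

variable [AddCommMonoid M] [Module R M]

/-- The form `(u ⊕ α, v ⊕ β) = ⟨u, β⟩` on `U ⊕ U'` given by a pairing `p = ⟨·,·⟩` of `U` and `U'`,
with `U ⊕ U'` encoded as `U × U'`; its symmetric and skew parts (up to a factor `2`) are the other
two forms. -/
def pairingForm (p : U →ₗ[R] U' →ₗ[R] M) : U × U' →ₗ[R] U × U' →ₗ[R] M :=
  p.compl₁₂ (LinearMap.fst R U U') (LinearMap.snd R U U')

/-- The form `(u ⊕ α, v ⊕ β)_sym = ⟨u, β⟩ + ⟨v, α⟩`, with respect to which `L` is Lagrangian when it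
equals `L.orthogonalBilin (symPairingForm p)`. -/
def symPairingForm (p : U →ₗ[R] U' →ₗ[R] M) : U × U' →ₗ[R] U × U' →ₗ[R] M :=
  pairingForm p + (pairingForm p).flip

variable {p : U →ₗ[R] U' →ₗ[R] M} {L : Submodule R (U × U')}

lemma symPairingForm_apply (x y : U × U') : symPairingForm p x y = p x.1 y.2 + p y.1 x.2 :=
  rfl

lemma mem_orthogonalBilin_symPairingForm_iff {x : U × U'} :
    x ∈ L.orthogonalBilin (symPairingForm p) ↔ ∀ y ∈ L, p x.1 y.2 + p y.1 x.2 = 0 := by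
  simp only [Submodule.mem_orthogonalBilin_iff, symPairingForm_apply, add_comm]

lemma mk_zero_mem_orthogonalBilin_symPairingForm_iff {u : U} :
    (u, 0) ∈ L.orthogonalBilin (symPairingForm p) ↔ ∀ y ∈ L, p u y.2 = 0 := by
  simp only [mem_orthogonalBilin_symPairingForm_iff, map_zero, add_zero]

lemma zero_mk_mem_orthogonalBilin_symPairingForm_iff {α : U'} :
    (0, α) ∈ L.orthogonalBilin (symPairingForm p) ↔ ∀ y ∈ L, p y.1 α = 0 := by
  simp only [mem_orthogonalBilin_symPairingForm_iff, map_zero, LinearMap.zero_apply, zero_add]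

end AddCommMonoid

section AddCommGroup

variable [AddCommGroup M] [Module R M]

/-- The form `(u ⊕ α, v ⊕ β)_skew = ⟨u, β⟩ - ⟨v, α⟩`. The kernel of its restriction to `L` is
`L ⊓ L.orthogonalBilin (skewPairingForm p)`. -/
def skewPairingForm (p : U →ₗ[R] U' →ₗ[R] M) : U × U' →ₗ[R] U × U' →ₗ[R] M :=
  pairingForm p - (pairingForm p).flip

variable {p : U →ₗ[R] U' →ₗ[R] M} {L : Submodule R (U × U')}

lemma skewPairingForm_apply (x y : U × U') : skewPairingForm p x y = p x.1 y.2 - p y.1 x.2 :=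
  rfl

lemma mem_orthogonalBilin_skewPairingForm_iff {x : U × U'} :
    x ∈ L.orthogonalBilin (skewPairingForm p) ↔ ∀ y ∈ L, p x.1 y.2 - p y.1 x.2 = 0 :=
  forall₂_congr fun y _ => by rw [skewPairingForm_apply, sub_eq_zero, eq_comm, sub_eq_zero]

theorem orthogonalBilin_symPairingForm_inf_skewPairingForm (h2 : IsSMulRegular M (2 : R))
    (p : U →ₗ[R] U' →ₗ[R] M) (L : Submodule R (U × U')) :
    L.orthogonalBilin (symPairingForm p) ⊓ L.orthogonalBilin (skewPairingForm p) =
      (L.orthogonalBilin (symPairingForm p) ⊓ Submodule.fst R U U') ⊔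
        (L.orthogonalBilin (symPairingForm p) ⊓ Submodule.snd R U U') := by
  ext x
  rw [mem_inf_fst_sup_inf_snd_iff, mk_zero_mem_orthogonalBilin_symPairingForm_iff,
    zero_mk_mem_orthogonalBilin_symPairingForm_iff, Submodule.mem_inf,
    mem_orthogonalBilin_symPairingForm_iff, mem_orthogonalBilin_skewPairingForm_iff]
  simp only [← forall₂_and, add_eq_zero_and_sub_eq_zero_iff h2]

theorem kernel_skew_restricted_to_sym_lagrangian_general (h2 : IsSMulRegular M (2 : R))
    (hLag : L.orthogonalBilin (symPairingForm p) = L) :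
    L ⊓ L.orthogonalBilin (skewPairingForm p) =
      (L ⊓ Submodule.fst R U U') ⊔ (L ⊓ Submodule.snd R U U') := by
  simpa only [hLag] using orthogonalBilin_symPairingForm_inf_skewPairingForm h2 p L

end AddCommGroup

end PairingForms

/-- Let `K` be a field with `char K ≠ 2`, `U` and `U'` finite-dimensional
`K`-vector spaces, and `p : U × U' → K` a nondegenerate bilinear pairing. On `U ⊕ U'` define
`(u⊕α, v⊕β)_sym = ⟨u,β⟩ + ⟨v,α⟩` and `(u⊕α, v⊕β)_skew = ⟨u,β⟩ − ⟨v,α⟩`. If `L` is a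
`(·,·)_sym`-Lagrangian subspace, then the kernel of `(·,·)_skew` restricted to `L` equals
`(L ∩ (U ⊕ 0)) ⊕ (L ∩ (0 ⊕ U'))`. -/
theorem kernel_skew_restricted_to_sym_lagrangian
    (K U U' : Type*) [Field K] [AddCommGroup U] [Module K U]
    [AddCommGroup U'] [Module K U'] [FiniteDimensional K U] [FiniteDimensional K U']
    (hchar : (2 : K) ≠ 0)
    (p : U →ₗ[K] U' →ₗ[K] K)
    (hnd_left : ∀ u : U, (∀ β : U', p u β = 0) → u = 0)
    (hnd_right : ∀ β : U', (∀ u : U, p u β = 0) → β = 0)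
    (L : Submodule K (U × U'))
    (hLag : ∀ x : U × U', (∀ y ∈ L, p x.1 y.2 + p y.1 x.2 = 0) ↔ x ∈ L) :
    ∀ x : U × U',
      (x ∈ L ∧ ∀ y ∈ L, p x.1 y.2 - p y.1 x.2 = 0) ↔
        x ∈ (L ⊓ Submodule.fst K U U') ⊔ (L ⊓ Submodule.snd K U U') := by
  have hL : L.orthogonalBilin (symPairingForm p) = L :=
    Submodule.ext fun x => mem_orthogonalBilin_symPairingForm_iff.trans (hLag x)
  intro x
  rw [← kernel_skew_restricted_to_sym_lagrangian_general (.of_ne_zero hchar) hL,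
    Submodule.mem_inf, mem_orthogonalBilin_skewPairingForm_iff]
end

section
/- Let E be a finite-dimensional vector space over a field K and let σ : E × E → K be a bilinear form. Let L ⊆ E* be the image of the linear map a_L : E → E*, β ↦ σ(·,β), and let R ⊆ E* be the image of the linear map a_R : E → E*, α ↦ σ(α,·). Then there is a well-defined bilinear pairing σ⁻¹ : L × R → K given by σ⁻¹(u, v) = σ(α, β) for any α, β ∈ E with v = σ(α,·) and u = σ(·,β) (the value is independent of the choices of α and β), and this pairing is nondegenerate: if u ∈ L satisfies σ⁻¹(u,v) = 0 for all v ∈ R then u = 0, and if v ∈ R satisfies σ⁻¹(u,v) = 0 for all u ∈ L then v = 0. -/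
/-!
The value `u α` of `u = σ(·,β)` depends on `α` only through `σ(α,·)`, so evaluation of elements
of `L` at `α` descends along `E → E / ker a_R ≅ R`, which gives the pairing.
Nondegeneracy is immediate from `σ⁻¹(σ(·,β), σ(α,·)) = σ(α,β)`: if this vanishes for all `α`
then `σ(·,β) = 0`, and if it vanishes for all `β` then `σ(α,·) = 0`.
-/

section InversePairing

open LinearMap

variable {A M N P : Type*} [CommRing A] [AddCommGroup M] [Module A M]
  [AddCommMonoid N] [Module A N] [AddCommGroup P] [Module A P]

theorem ker_le_ker_flip_subtype_range_flip (σ : M →ₗ[A] N →ₗ[A] P) :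
    ker σ ≤ ker (range σ.flip).subtype.flip := by
  intro α hα
  rw [mem_ker] at hα ⊢
  ext ⟨_, β, rfl⟩
  exact LinearMap.congr_fun hα β

/-- The pairing `σ⁻¹ : L × R → P` of the ranges `L` of `β ↦ σ(·,β)` and `R` of `α ↦ σ(α,·)`.
It sends `(u, σ(α,·))` to `u α`; it is encoded as the flip of the map on `R ≅ M / ker σ` to which
`α ↦ (u ↦ u α)` descends. -/
noncomputable def inversePairing (σ : M →ₗ[A] N →ₗ[A] P) :
    range σ.flip →ₗ[A] range σ →ₗ[A] P :=
  ((ker σ).liftQ (range σ.flip).subtype.flip (ker_le_ker_flip_subtype_range_flip σ) ∘ₗ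
    σ.quotKerEquivRange.symm.toLinearMap).flip

theorem inversePairing_apply (σ : M →ₗ[A] N →ₗ[A] P) (u : range σ.flip) (α : M) :
    inversePairing σ u ⟨σ α, mem_range_self σ α⟩ = u.val α := by
  simp [inversePairing]

theorem inversePairing_separatingLeft (σ : M →ₗ[A] N →ₗ[A] P) :
    (inversePairing σ).SeparatingLeft := by
  intro u hu
  ext α
  rw [← inversePairing_apply, hu]
  simp

theorem inversePairing_separatingRight (σ : M →ₗ[A] N →ₗ[A] P) :
    (inversePairing σ).SeparatingRight := by
  rintro ⟨_, α, rfl⟩ hα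
  ext β
  exact (inversePairing_apply σ ⟨σ.flip β, mem_range_self σ.flip β⟩ α).symm.trans (hα _)

theorem exists_nondegenerate_inverse_pairing_general (σ : M →ₗ[A] N →ₗ[A] P) :
    ∃ p : range σ.flip →ₗ[A] range σ →ₗ[A] P,
      (∀ (α : M) (β : N),
        p ⟨σ.flip β, mem_range_self σ.flip β⟩ ⟨σ α, mem_range_self σ α⟩ = σ α β) ∧
      p.Nondegenerate :=
  ⟨inversePairing σ, fun α _ ↦ inversePairing_apply σ _ α,
    inversePairing_separatingLeft σ, inversePairing_separatingRight σ⟩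

end InversePairing

/-- Let `E` be a finite-dimensional vector space over a field `K` with
a bilinear form `σ`. Let `L ⊆ E*` be the image of `a_L : β ↦ σ(·,β)` (i.e. of `σ.flip`)
and `R ⊆ E*` the image of `a_R : α ↦ σ(α,·)` (i.e. of `σ`). Then there is a well-defined
bilinear pairing `σ⁻¹ : L × R → K` with `σ⁻¹(σ(·,β), σ(α,·)) = σ(α,β)` (independent of
the choice of representatives `α`, `β`), and this pairing is nondegenerate. -/
theorem exists_nondegenerate_inverse_pairing
    (K E : Type*) [Field K] [AddCommGroup E] [Module K E] [FiniteDimensional K E]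
    (σ : E →ₗ[K] E →ₗ[K] K) :
    ∃ p : LinearMap.range σ.flip →ₗ[K] LinearMap.range σ →ₗ[K] K,
      (∀ α β : E,
        p ⟨σ.flip β, LinearMap.mem_range_self σ.flip β⟩
          ⟨σ α, LinearMap.mem_range_self σ α⟩ = σ α β) ∧
      (∀ u : LinearMap.range σ.flip, (∀ v : LinearMap.range σ, p u v = 0) → u = 0) ∧
      (∀ v : LinearMap.range σ, (∀ u : LinearMap.range σ.flip, p u v = 0) → v = 0) :=
  exists_nondegenerate_inverse_pairing_general σ
end
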